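/- The octonion algebra over a field k of characteristic ≠ 2 is isomorphic to the twisted group algebra k_F G with G = Z₂ × Z₂ × Z₂ (written additively with vector notation) and F(x,y) = (-1)^{f(x,y)}, where f(x,y) = Σ_{i ≤ j} x_i y_j + y_1 x_2 x_3 + x_1 y_2 x_3 + x_1 x_2 y_3. -/

import Mathlib

/-!
The basis vector `e_x` of `k_F G` is sent to plus or minus a basis vector of `ℍ[k] × ℍ[k]`.
Write `ℓ = (0, 1)`. Sending the generators `e_100`, `e_010`, `e_001` to `i`, `j`, `ℓ` determines the
rest: `e_100 e_010 = -e_110`, `e_100 e_001 = -e_101`, `e_010 e_001 = -e_011` and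
`e_110 e_001 = -e_111` give `e_110 ↦ (-ij, 0)`, `e_101 ↦ (0, i)`, `e_011 ↦ (0, j)` and
`e_111 ↦ (0, -ij)` (`octEquiv`). Multiplicativity is then an identity between bilinear forms in the
sixteen coordinates: `sum_cube` writes the twisted convolution at each of the eight points of
`(Z₂)³` as eight signed products, and these agree with the quaternionic formulas.
-/


/-- The twisted product on the group algebra of an additive group. -/
def tmulA {G : Type*} [AddCommGroup G] [Fintype G] {k : Type*} [Field k]
    (F : G → G → k) (a b : G → k) : G → k :=
  fun z => ∑ x : G, F x (z - x) * a x * b (z - x)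

def delta {G : Type*} [DecidableEq G] {k : Type*} [Zero k] [One k] (x : G) : G → k :=
  fun y => if y = x then 1 else 0

/-- The octonion exponent function `f` on `(Z₂)³`:
`f(x,y) = Σ_{i ≤ j} x_i y_j + y₁x₂x₃ + x₁y₂x₃ + x₁x₂y₃`. -/
def fOct (x y : Fin 3 → ZMod 2) : ZMod 2 :=
  (∑ i : Fin 3, ∑ j : Fin 3, if i ≤ j then x i * y j else 0)
    + y 0 * x 1 * x 2 + x 0 * y 1 * x 2 + x 0 * x 1 * y 2

/-- The octonion cochain `F(x,y) = (-1)^{f(x,y)}`. -/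
def FOct (k : Type*) [Field k] (x y : Fin 3 → ZMod 2) : k :=
  (-1 : k) ^ (fOct x y).val

/-- The Cayley–Dickson doubling (with `α = -1`) of the quaternion algebra over `k`:
the octonion product on `ℍ[k] × ℍ[k]`. -/
def cdMul {k : Type*} [Field k] (p q : Quaternion k × Quaternion k) :
    Quaternion k × Quaternion k :=
  (p.1 * q.1 - q.2 * star p.2, star p.1 * q.2 + q.1 * p.2)

theorem univ_cube : (Finset.univ : Finset (Fin 3 → ZMod 2)) =
    {![0, 0, 0], ![1, 0, 0], ![0, 1, 0], ![1, 1, 0],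
      ![0, 0, 1], ![1, 0, 1], ![0, 1, 1], ![1, 1, 1]} := by
  decide

theorem sum_cube {M : Type*} [AddCommMonoid M] (g : (Fin 3 → ZMod 2) → M) :
    ∑ x, g x = g ![0, 0, 0] + (g ![1, 0, 0] + (g ![0, 1, 0] + (g ![1, 1, 0] +
      (g ![0, 0, 1] + (g ![1, 0, 1] + (g ![0, 1, 1] + g ![1, 1, 1])))))) := by
  rw [univ_cube]
  repeat rw [Finset.sum_insert (by decide)]
  rw [Finset.sum_singleton]

theorem forall_cube {P : (Fin 3 → ZMod 2) → Prop} (h0 : P ![0, 0, 0]) (h1 : P ![1, 0, 0])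
    (h2 : P ![0, 1, 0]) (h3 : P ![1, 1, 0]) (h4 : P ![0, 0, 1]) (h5 : P ![1, 0, 1])
    (h6 : P ![0, 1, 1]) (h7 : P ![1, 1, 1]) (x : Fin 3 → ZMod 2) : P x := by
  have hx := Finset.mem_univ x
  rw [univ_cube] at hx
  simp only [Finset.mem_insert, Finset.mem_singleton] at hx
  rcases hx with rfl | rfl | rfl | rfl | rfl | rfl | rfl | rfl <;> assumption

theorem FOct_eq_ite (k : Type*) [Field k] (x y : Fin 3 → ZMod 2) :
    FOct k x y = if fOct x y = 0 then 1 else -1 := by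
  unfold FOct
  generalize fOct x y = t
  obtain rfl | rfl : t = 0 ∨ t = 1 := by revert t; decide
  · simp
  · simp [ZMod.val_one]

/-- The linear isomorphism `k_F G ≃ ℍ[k] × ℍ[k]` matching the basis `e_x` with the signed standard
basis: `e_000, e_100, e_010, e_110 ↦ 1, i, j, -ij` in the first summand, and likewise
`e_001, e_101, e_011, e_111 ↦ 1, i, j, -ij` in the second. -/
def octEquiv (k : Type*) [Field k] : ((Fin 3 → ZMod 2) → k) ≃ₗ[k] (Quaternion k × Quaternion k) where
  toFun a := (⟨a ![0, 0, 0], a ![1, 0, 0], a ![0, 1, 0], -a ![1, 1, 0]⟩,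
    ⟨a ![0, 0, 1], a ![1, 0, 1], a ![0, 1, 1], -a ![1, 1, 1]⟩)
  invFun p x :=
    let q := if x 2 = 0 then p.1 else p.2
    if x 1 = 0 then (if x 0 = 0 then q.re else q.imI) else (if x 0 = 0 then q.imJ else -q.imK)
  map_add' a b := by ext <;> first | rfl | exact neg_add _ _
  map_smul' c a := by ext <;> first | rfl | exact (mul_neg _ _).symm
  left_inv a := by
    funext x
    revert x
    apply forall_cube <;> simp
  right_inv p := by ext <;> simp

theorem octEquiv_tmulA {k : Type*} [Field k] (a b : (Fin 3 → ZMod 2) → k) :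
    octEquiv k (tmulA (FOct k) a b) = cdMul (octEquiv k a) (octEquiv k b) := by
  ext <;>
    simp only [cdMul, Quaternion.re_add, Quaternion.imI_add, Quaternion.imJ_add,
      Quaternion.imK_add, Quaternion.re_sub, Quaternion.imI_sub, Quaternion.imJ_sub,
      Quaternion.imK_sub, Quaternion.re_mul, Quaternion.imI_mul, Quaternion.imJ_mul,
      Quaternion.imK_mul, Quaternion.re_star, Quaternion.imI_star, Quaternion.imJ_star,
      Quaternion.imK_star] <;>
    -- the twisted convolution as an explicit sum, with `z - x = z + x` in characteristic two
    simp [octEquiv, tmulA, sum_cube, FOct_eq_ite,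
      show ∀ x : ZMod 2, -x = x by decide] <;>
    -- `decide` evaluates the signs
    simp +decide <;> ring

/-- the octonion algebra over `k` (char ≠ 2) is isomorphic to the
twisted group algebra `k_F G`, `G = (Z₂)³`, `F = (-1)^f`. -/
theorem stmt14 {k : Type*} [Field k] (h2 : (2 : k) ≠ 0) :
    ∃ e : ((Fin 3 → ZMod 2) → k) ≃ₗ[k] (Quaternion k × Quaternion k),
      (∀ a b : (Fin 3 → ZMod 2) → k,
        e (tmulA (FOct k) a b) = cdMul (e a) (e b)) ∧
      e (delta 0) = (1, 0) := by
  refine ⟨octEquiv k, octEquiv_tmulA, ?_⟩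
  ext <;> simp +decide [octEquiv, delta] <;> rfl
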